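/- Let d ≥ 2 be an integer, 0<p<1, and let r_{n,k} be the root-cluster weights for random increasing d-ary trees (φ(δ)=d!/(d-δ)! for 0≤δ≤d, φ(δ)=0 for δ>d). Then for every fixed integer k ≥ 1, the probability that the root cluster has exactly k vertices converges: lim_{n→∞} r_{n,k}/b_n = (1/k)·C(kd, k-1)·p^{k-1}·(1-p)^{kd-k+1}, the probability that a Galton–Watson tree with Binomial(d,p) offspring distribution has total progeny exactly k. -/

import Mathlib

open Finset Filter Asymptotics

/-- The root-cluster weight recursion. -/
noncomputable def clusterRec (p : ℝ) (φ : ℕ → ℝ) (r : ℕ → ℕ → ℝ) (b : ℕ → ℝ) : Prop :=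
  (∀ m, b m = ∑ k ∈ Finset.Icc 1 m, r m k) ∧
  ∀ n k : ℕ, 1 ≤ n → 1 ≤ k →
    r n k =
      ∑ δ ∈ Finset.range n, ∑ s ∈ (Finset.range (δ + 1)).attach,
        (δ.choose s.1 : ℝ) * (φ δ / (δ.factorial : ℝ)) *
          ∑ f ∈ (Finset.Nat.antidiagonalTuple δ (n - 1)).filter (fun f => ∀ i, 1 ≤ f i),
            (((n - 1).factorial : ℝ) / ∏ i, ((f i).factorial : ℝ)) *
              ∑ g ∈ (Finset.Nat.antidiagonalTuple s.1 (k - 1)).filter (fun g => ∀ i, 1 ≤ g i),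
                p ^ s.1 * (1 - p) ^ (δ - s.1) *
                  (∏ i : Fin s.1,
                    r (f (Fin.castLE (Nat.lt_succ_iff.mp (Finset.mem_range.mp s.2)) i)) (g i)) *
                  ∏ j ∈ Finset.univ.filter (fun j : Fin δ => s.1 ≤ (j : ℕ)), b (f j)

/-- Partial Bell polynomials. -/
noncomputable def bellPartial (k j : ℕ) (x : ℕ → ℝ) : ℝ :=
  ∑ m ∈ (Fintype.piFinset (fun _ : Fin (k - j + 1) => Finset.range (k + 1))).filter
      (fun m : Fin (k - j + 1) → ℕ => (∑ i : Fin (k - j + 1), ((i : ℕ) + 1) * m i) = k ∧ (∑ i, m i) = j),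
    (k.factorial : ℝ) *
      ∏ i : Fin (k - j + 1), x ((i : ℕ) + 1) ^ m i /
        (((m i).factorial : ℝ) * (((i : ℕ) + 1).factorial : ℝ) ^ m i)

/-!
Let `R(z, u) = ∑ r_{n,k} u ^ k z ^ n / n!`, `B(z) = R(z, 1)` and `Q = 1 + p R + (1 - p) B`. For
`d`-ary trees the recursion says `∂R/∂z = u Q ^ d`, and at `u = 1` it says that `H = 1 + B` solves
`H' = H ^ d`. Hence the coefficients of `H ^ l` are of smaller order than those of `H ^ m` for
`0 < l < m`, and by Toeplitz's lemma ratios of coefficients multiply: if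
`[z ^ n] F / [z ^ n] H ^ l → α` and `[z ^ n] G / [z ^ n] H ^ m → β`, then
`[z ^ n] F G / [z ^ n] H ^ (l + m) → α β`.

Let `q_k` be the limit of `[u ^ k z ^ n] Q / [z ^ n] H`. The two differential equations give
`q = 1 - p + p u q ^ d`, the equation for the total progeny of a Galton–Watson tree with
`Binomial(d, p)` offspring, and `r_{n,k} / b_n → [u ^ (k - 1)] q ^ d`. The latter is a Raney number
times `p ^ (k - 1) (1 - p) ^ (k d - k + 1)`.
-/

section WeightedSums

open scoped Topology

theorem tendsto_sum_smul_of_weights {α ι E : Type*} [NormedAddCommGroup E] [NormedSpace ℝ E]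
    {l : Filter α} {F : Filter ι} {s : α → Finset ι} {w : α → ι → ℝ} {f : ι → E} {L : E} {C : ℝ}
    (hw : ∀ a i, 0 ≤ w a i) (hw_sum : ∀ a, ∑ i ∈ s a, w a i = 1)
    (hw_compl : ∀ U ∈ F, Tendsto (fun a => ∑ i ∈ s a, Uᶜ.indicator (w a) i) l (𝓝 0))
    (hf_bdd : ∀ i, ‖f i‖ ≤ C) (hf : Tendsto f F (𝓝 L)) :
    Tendsto (fun a => ∑ i ∈ s a, w a i • f i) l (𝓝 L) := by
  rw [Metric.tendsto_nhds]
  intro ε hε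
  have hU : {i | ‖f i - L‖ < ε / 2} ∈ F := by
    filter_upwards [hf (Metric.ball_mem_nhds L (half_pos hε))] with i hi
    rwa [Set.mem_preimage, mem_ball_iff_norm] at hi
  set U := {i | ‖f i - L‖ < ε / 2}
  have h_term (a : α) (i : ι) :
      ‖w a i • (f i - L)‖ ≤ w a i * (ε / 2) + Uᶜ.indicator (w a) i * (C + ‖L‖) := by
    rw [norm_smul, Real.norm_of_nonneg (hw a i)]
    by_cases hi : i ∈ U
    · rw [Set.indicator_of_notMem (Set.notMem_compl_iff.2 hi), zero_mul, add_zero]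
      exact mul_le_mul_of_nonneg_left hi.le (hw a i)
    · rw [Set.indicator_of_mem hi]
      have h_norm : ‖f i - L‖ ≤ C + ‖L‖ := (norm_sub_le _ _).trans (by grw [hf_bdd i])
      nlinarith [mul_le_mul_of_nonneg_left h_norm (hw a i), mul_nonneg (hw a i) hε.le]
  have h_small := (hw_compl U hU).mul_const (C + ‖L‖)
  rw [zero_mul] at h_small
  filter_upwards [h_small.eventually_lt_const (half_pos hε)] with a ha
  calc dist (∑ i ∈ s a, w a i • f i) L
      = ‖∑ i ∈ s a, w a i • (f i - L)‖ := by
        simp only [smul_sub, sum_sub_distrib, ← sum_smul, hw_sum, one_smul, dist_eq_norm]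
    _ ≤ ∑ i ∈ s a, (w a i * (ε / 2) + Uᶜ.indicator (w a) i * (C + ‖L‖)) :=
        norm_sum_le_of_le _ fun i _ => h_term a i
    _ = ε / 2 + (∑ i ∈ s a, Uᶜ.indicator (w a) i) * (C + ‖L‖) := by
        rw [sum_add_distrib, ← sum_mul, ← sum_mul, hw_sum, one_mul]
    _ < ε := by linarith

theorem sum_antidiagonal_ite_le {x y : ℕ → ℝ} (hx : ∀ n, 0 ≤ x n) (hy : ∀ n, 0 ≤ y n)
    (hy_mono : Monotone y) (N n : ℕ) :
    ∑ ij ∈ antidiagonal n, (if ij.1 < N then x ij.1 * y ij.2 else 0) ≤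
      (∑ i ∈ range N, x i) * y n := by
  rw [Nat.sum_antidiagonal_eq_sum_range_succ fun i j => if i < N then x i * y j else 0,
    ← sum_filter, sum_mul]
  calc ∑ i ∈ range n.succ with i < N, x i * y (n - i)
      ≤ ∑ i ∈ range n.succ with i < N, x i * y n :=
        sum_le_sum fun i _ => mul_le_mul_of_nonneg_left (hy_mono (Nat.sub_le n i)) (hx i)
    _ ≤ ∑ i ∈ range N, x i * y n :=
        sum_le_sum_of_subset_of_nonneg (fun i hi => mem_range.2 (mem_filter.1 hi).2)
          fun i _ _ => mul_nonneg (hx i) (hy n)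

theorem sum_antidiagonal_indicator_compl_le {x y : ℕ → ℝ} (hx : ∀ n, 0 ≤ x n)
    (hy : ∀ n, 0 ≤ y n) (hx_mono : Monotone x) (hy_mono : Monotone y) {U : Set (ℕ × ℕ)} {M N : ℕ}
    (hU : Set.Ici (M, N) ⊆ U) (n : ℕ) :
    ∑ ij ∈ antidiagonal n, Uᶜ.indicator (fun ij => x ij.1 * y ij.2) ij ≤
      (∑ i ∈ range M, x i) * y n + (∑ j ∈ range N, y j) * x n := by
  have h_fst := sum_antidiagonal_ite_le hx hy hy_mono M n
  have h_snd := sum_antidiagonal_ite_le hy hx hx_mono N n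
  rw [← Finset.Nat.sum_antidiagonal_swap] at h_snd
  simp only [Prod.fst_swap, Prod.snd_swap, mul_comm (y _)] at h_snd
  refine le_trans ?_ (add_le_add h_fst h_snd)
  rw [← sum_add_distrib]
  refine sum_le_sum fun ij _ => ?_
  have h_nonneg := mul_nonneg (hx ij.1) (hy ij.2)
  refine Set.indicator_apply_le' (fun hij => ?_) fun _ => ?_
  · have h_lt : ij.1 < M ∨ ij.2 < N := by
      by_contra! h
      exact hij (hU h)
    split_ifs <;> first | linarith | omega
  · split_ifs <;> linarith

theorem tendsto_sum_antidiagonal_indicator_compl_div {x y z : ℕ → ℝ}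
    (hx : ∀ n, 0 ≤ x n) (hy : ∀ n, 0 ≤ y n) (hz : ∀ n, 0 ≤ z n)
    (hx_mono : Monotone x) (hy_mono : Monotone y)
    (hxz : Tendsto (fun n => x n / z n) atTop (𝓝 0))
    (hyz : Tendsto (fun n => y n / z n) atTop (𝓝 0))
    {U : Set (ℕ × ℕ)} (hU : U ∈ (atTop : Filter ℕ) ×ˢ atTop) :
    Tendsto (fun n => (∑ ij ∈ antidiagonal n, Uᶜ.indicator (fun ij => x ij.1 * y ij.2) ij) / z n)
      atTop (𝓝 0) := by
  rw [prod_atTop_atTop_eq, mem_atTop_sets] at hU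
  obtain ⟨⟨M, N⟩, hMN⟩ := hU
  have h_lim := (hyz.const_mul (∑ i ∈ range M, x i)).add (hxz.const_mul (∑ j ∈ range N, y j))
  rw [mul_zero, mul_zero, add_zero] at h_lim
  refine squeeze_zero (fun n => div_nonneg (sum_nonneg fun ij _ => ?_) (hz n)) (fun n => ?_) h_lim
  · exact Set.indicator_nonneg (fun ij _ => mul_nonneg (hx _) (hy _)) ij
  · rw [mul_div_assoc', mul_div_assoc', ← add_div]
    exact div_le_div_of_nonneg_right
      (sum_antidiagonal_indicator_compl_le hx hy hx_mono hy_mono hMN n) (hz n)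

theorem tendsto_sum_antidiagonal_mul_div {x y z u v : ℕ → ℝ} {α β : ℝ}
    (hx : ∀ n, 0 < x n) (hy : ∀ n, 0 < y n)
    (hz : ∀ n, z n = ∑ ij ∈ antidiagonal n, x ij.1 * y ij.2)
    (hx_mono : Monotone x) (hy_mono : Monotone y)
    (hxz : Tendsto (fun n => x n / z n) atTop (𝓝 0))
    (hyz : Tendsto (fun n => y n / z n) atTop (𝓝 0))
    (hu : Tendsto (fun n => u n / x n) atTop (𝓝 α))
    (hv : Tendsto (fun n => v n / y n) atTop (𝓝 β)) :
    Tendsto (fun n => (∑ ij ∈ antidiagonal n, u ij.1 * v ij.2) / z n) atTop (𝓝 (α * β)) := by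
  have hz_pos (n : ℕ) : 0 < z n :=
    hz n ▸ sum_pos (fun ij _ => mul_pos (hx _) (hy _)) ⟨(0, n), by simp⟩
  obtain ⟨C, hC⟩ := (Metric.isBounded_range_of_tendsto _ hu).exists_norm_le
  obtain ⟨D, hD⟩ := (Metric.isBounded_range_of_tendsto _ hv).exists_norm_le
  have h := tendsto_sum_smul_of_weights (s := antidiagonal) (l := atTop)
    (w := fun n ij => x ij.1 * y ij.2 / z n) (f := fun ij => u ij.1 / x ij.1 * (v ij.2 / y ij.2))
    (F := atTop ×ˢ atTop) (C := C * D) (L := α * β)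
    (fun n ij => (div_pos (mul_pos (hx _) (hy _)) (hz_pos n)).le)
    (fun n => by rw [← sum_div, ← hz, div_self (hz_pos n).ne'])
    (fun U hU => by
      simpa only [div_eq_mul_inv, Set.indicator_mul_const, ← sum_mul] using
        tendsto_sum_antidiagonal_indicator_compl_div (fun n => (hx n).le) (fun n => (hy n).le)
          (fun n => (hz_pos n).le) hx_mono hy_mono hxz hyz hU)
    (fun ij => norm_mul_le_of_le (hC _ ⟨_, rfl⟩) (hD _ ⟨_, rfl⟩))
    ((hu.comp tendsto_fst).mul (hv.comp tendsto_snd))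
  refine h.congr fun n => ?_
  rw [sum_div]
  refine sum_congr rfl fun ij _ => ?_
  have := (hx ij.1).ne'
  have := (hy ij.2).ne'
  rw [smul_eq_mul]
  field_simp

theorem tendsto_zero_of_succ_le_one_sub_mul {ρ a : ℕ → ℝ} (hρ : ∀ n, 0 ≤ ρ n)
    (hρ_succ : ∀ n, ρ (n + 1) ≤ (1 - a n) * ρ n)
    (ha : Tendsto (fun n => ∑ i ∈ range n, a i) atTop atTop) : Tendsto ρ atTop (𝓝 0) := by
  have h_exp (n : ℕ) : ρ n ≤ ρ 0 * Real.exp (-∑ i ∈ range n, a i) := by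
    induction n with
    | zero => simp
    | succ n ih =>
      calc ρ (n + 1) ≤ Real.exp (-a n) * ρ n := by
            grw [hρ_succ n, Real.one_sub_le_exp_neg (a n)]
            exact hρ n
        _ ≤ Real.exp (-a n) * (ρ 0 * Real.exp (-∑ i ∈ range n, a i)) := by grw [ih]
        _ = ρ 0 * Real.exp (-∑ i ∈ range (n + 1), a i) := by
            rw [sum_range_succ, neg_add, Real.exp_add]; ring
  refine squeeze_zero hρ h_exp ?_
  simpa using (Real.tendsto_exp_neg_atTop_nhds_zero.comp ha).const_mul (ρ 0)

theorem tendsto_sum_range_div_linear_atTop {c α β : ℝ} (hc : 0 < c) (hα : 0 < α) (hβ : 0 ≤ β) :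
    Tendsto (fun n => ∑ i ∈ range n, c / (α + β * i)) atTop atTop := by
  have h := Real.tendsto_sum_range_one_div_nat_succ_atTop.const_mul_atTop
    (show 0 < c / (α + β) by positivity)
  refine tendsto_atTop_mono (fun n => ?_) h
  rw [mul_sum]
  gcongr with i
  rw [mul_one_div, div_div]
  gcongr
  nlinarith [Nat.cast_nonneg (α := ℝ) i, mul_nonneg hα.le (Nat.cast_nonneg (α := ℝ) i)]

end WeightedSums

section IncreasingTreeSeries

open PowerSeries

/-- The power series `H = (1 - e z)^(-1/e)` (and `exp z` if `e = 0`), characterised by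
`H' = H ^ (e + 1)` and `H(0) = 1`: the exponential generating function of increasing
`(e + 1)`-ary trees, the empty tree included. -/
structure IsIncreasingTreeSeries {K : Type*} [Field K] (e : ℕ) (H : K⟦X⟧) : Prop where
  constantCoeff_eq_one : constantCoeff H = 1
  derivative_eq_pow : derivative K H = H ^ (e + 1)

namespace IsIncreasingTreeSeries

section Field

variable {K : Type*} [Field K] [CharZero K] {e : ℕ} {H : K⟦X⟧}

theorem pow_mul_one_sub_C_mul_X (h : IsIncreasingTreeSeries e H) :
    H ^ e * (1 - C (e : K) * X) = 1 := by
  have h_derivative : derivative K (H ^ e) = C (e : K) * (H ^ e) ^ 2 := by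
    rw [derivative_pow, h.derivative_eq_pow]
    rcases e with _ | e
    · simp
    · rw [map_natCast, Nat.add_sub_cancel]
      ring
  have h_mul_inv : H ^ e * (H ^ e)⁻¹ = 1 :=
    PowerSeries.mul_inv_cancel _ (by simp [h.constantCoeff_eq_one])
  have h_inv : (H ^ e)⁻¹ = 1 - C (e : K) * X := by
    apply derivative.ext
    · rw [derivative_inv', h_derivative, map_sub, derivative_one, Derivation.leibniz,
        derivative_C, derivative_X, smul_eq_mul, smul_zero, mul_one, add_zero, zero_sub]
      linear_combination (-C (e : K)) * (H ^ e * (H ^ e)⁻¹ + 1) * h_mul_inv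
    · simp [h.constantCoeff_eq_one]
  rw [← h_inv, h_mul_inv]

theorem derivative_pow_mul_one_sub_C_mul_X (h : IsIncreasingTreeSeries e H) (m : ℕ) :
    derivative K (H ^ m) * (1 - C (e : K) * X) = (m : K⟦X⟧) * H ^ m := by
  rw [derivative_pow, h.derivative_eq_pow]
  rcases m with _ | m
  · simp
  · rw [Nat.add_sub_cancel]
    linear_combination ((m + 1 : ℕ) * H ^ (m + 1) : K⟦X⟧) * h.pow_mul_one_sub_C_mul_X

theorem add_one_mul_coeff_pow (h : IsIncreasingTreeSeries e H) (m n : ℕ) :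
    (n + 1) * coeff (n + 1) (H ^ m) = (m + e * n) * coeff n (H ^ m) := by
  have h_coeff_X : coeff n (C (e : K) * X * derivative K (H ^ m)) = e * n * coeff n (H ^ m) := by
    rcases n with _ | n
    · simp
    · rw [mul_assoc, coeff_C_mul, coeff_succ_X_mul, coeff_derivative]
      push_cast
      ring
  have h_coeff := congrArg (coeff n) (h.derivative_pow_mul_one_sub_C_mul_X m)
  rw [mul_one_sub, mul_comm _ (_ * X), map_sub, h_coeff_X, coeff_derivative, ← map_natCast C,
    coeff_C_mul] at h_coeff
  linear_combination h_coeff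

end Field

section Real

open scoped Topology

variable {e : ℕ} {H : ℝ⟦X⟧}

theorem coeff_pow_pos (h : IsIncreasingTreeSeries e H) {m : ℕ} (hm : 0 < m) (n : ℕ) :
    0 < coeff n (H ^ m) := by
  induction n with
  | zero => simp [h.constantCoeff_eq_one]
  | succ n ih =>
    have h_pos : 0 < (m + e * n) * coeff n (H ^ m) := by positivity
    rw [← h.add_one_mul_coeff_pow] at h_pos
    exact pos_of_mul_pos_right h_pos (by positivity)

theorem monotone_coeff_pow (h : IsIncreasingTreeSeries e H) (he : 0 < e) {m : ℕ} (hm : 0 < m) :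
    Monotone fun n => coeff n (H ^ m) := by
  refine monotone_nat_of_le_succ fun n => ?_
  have h_factor : n + 1 ≤ m + e * n := by nlinarith
  refine le_of_mul_le_mul_left ?_ (show (0 : ℝ) < n + 1 by positivity)
  rw [h.add_one_mul_coeff_pow]
  exact mul_le_mul_of_nonneg_right (mod_cast h_factor) (h.coeff_pow_pos hm n).le

theorem tendsto_coeff_pow_div_coeff_pow (h : IsIncreasingTreeSeries e H) {l m : ℕ}
    (hl : 0 < l) (hlm : l < m) :
    Tendsto (fun n => coeff n (H ^ l) / coeff n (H ^ m)) atTop (𝓝 0) := by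
  have hl_pos := h.coeff_pow_pos hl
  have hm_pos := h.coeff_pow_pos (hl.trans hlm)
  have hm : (0 : ℝ) < m := mod_cast hl.trans hlm
  have h_gap : (0 : ℝ) < m - l := sub_pos.2 (mod_cast hlm)
  refine tendsto_zero_of_succ_le_one_sub_mul (fun n => (div_pos (hl_pos n) (hm_pos n)).le)
    (fun n => le_of_eq ?_) (tendsto_sum_range_div_linear_atTop h_gap hm e.cast_nonneg)
  have h_succ (j : ℕ) : coeff (n + 1) (H ^ j) = (j + e * n) / (n + 1) * coeff n (H ^ j) := by
    rw [div_mul_eq_mul_div, ← h.add_one_mul_coeff_pow, mul_div_cancel_left₀ _ (by positivity)]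
  have := (hm_pos n).ne'
  rw [h_succ, h_succ]
  field_simp
  ring

end Real

end IsIncreasingTreeSeries

end IncreasingTreeSeries

section FussCatalan

open PowerSeries

variable {K : Type*} [Field K]

/-- The Raney (two-parameter Fuss–Catalan) number `a / (a + d k) * C(a + d k, k)`, as an element
of `K`. Division by zero makes it `0`, not `1`, for `a = k = 0`. -/
def raneyNumber (K : Type*) [Field K] (a d k : ℕ) : K :=
  a / ((a + d * k : ℕ) : K) * ((a + d * k).choose k : K)

theorem coeff_succ_pow_succ {c p : K} {d : ℕ} {q : K⟦X⟧} (hq : q = C c + C p * X * q ^ d)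
    (a k : ℕ) :
    coeff (k + 1) (q ^ (a + 1)) = c * coeff (k + 1) (q ^ a) + p * coeff k (q ^ (a + d)) := by
  have h_pow : q ^ (a + 1) = C c * q ^ a + C p * (X * q ^ (a + d)) := by
    rw [pow_succ]
    nth_rw 2 [hq]
    ring
  rw [h_pow, map_add, coeff_C_mul, coeff_C_mul, coeff_succ_X_mul]

theorem raneyNumber_zero_left (d k : ℕ) : raneyNumber K 0 d k = 0 := by
  simp [raneyNumber]

variable [CharZero K]

theorem raneyNumber_zero_right (d : ℕ) {a : ℕ} (ha : 0 < a) : raneyNumber K a d 0 = 1 := by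
  simp [raneyNumber, ha.ne']

theorem raneyNumber_succ_succ {d : ℕ} (hd : 0 < d) (a k : ℕ) :
    raneyNumber K (a + 1) d (k + 1) = raneyNumber K a d (k + 1) + raneyNumber K (a + d) d k := by
  obtain ⟨N, hN⟩ : ∃ N, a + d * (k + 1) = N + 1 := ⟨a + d * k + (d - 1), by grind⟩
  have hN' : (a + d * (k + 1) : K) = N + 1 := mod_cast hN
  have h_top : ((k : K) + 1) * (N + 2).choose (k + 1) = (N + 2) * (N + 1).choose k := by
    rw [mul_comm]
    exact_mod_cast (Nat.add_one_mul_choose_eq (N + 1) k).symm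
  have h_pascal : ((N + 2).choose (k + 1) : K) = (N + 1).choose k + (N + 1).choose (k + 1) :=
    mod_cast Nat.choose_succ_succ (N + 1) k
  have hN1 : (N + 1 : K) ≠ 0 := N.cast_add_one_ne_zero
  have hN2 : (N + 2 : K) ≠ 0 := mod_cast (N + 1).cast_add_one_ne_zero (R := K)
  rw [raneyNumber, raneyNumber, raneyNumber, add_right_comm a 1, hN,
    show a + d + d * k = N + 1 by rw [← hN]; ring]
  push_cast
  rw [show (N : K) + 1 + 1 = N + 2 by ring, eq_sub_of_add_eq' h_pascal.symm]
  field_simp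
  refine mul_left_cancel₀ (k.cast_add_one_ne_zero (R := K)) ?_
  linear_combination (N + 1 - a) * h_top - (N + 2) * ((N + 1).choose k : K) * hN'

theorem coeff_pow_eq_raneyNumber {c p : K} {d : ℕ} (hd : 0 < d) {q : K⟦X⟧}
    (hq : q = C c + C p * X * q ^ d) (k : ℕ) {a : ℕ} (ha : 0 < a) :
    coeff k (q ^ a) = raneyNumber K a d k * p ^ k * c ^ (a + (d - 1) * k) := by
  induction k generalizing a with
  | zero =>
    have h_const : constantCoeff q = c := by
      rw [hq]
      simp
    rw [raneyNumber_zero_right d ha, coeff_zero_eq_constantCoeff_apply, map_pow, h_const]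
    simp
  | succ k ih_k =>
    clear ha
    induction a with
    | zero => simp [raneyNumber_zero_left]
    | succ a ih_a =>
      have h_exp : a + d + (d - 1) * k = a + 1 + (d - 1) * (k + 1) := by
        obtain ⟨e, rfl⟩ := Nat.exists_eq_add_of_lt hd
        simp only [zero_add, Nat.add_sub_cancel]
        ring
      rw [coeff_succ_pow_succ hq, ih_a, ih_k (by omega), raneyNumber_succ_succ hd, h_exp]
      ring

end FussCatalan

section ExponentialGeneratingFunction

open scoped PowerSeries Polynomial

theorem powerSeries_coeff_prod_eq_sum_antidiagonalTuple {R : Type*} [CommSemiring R]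
    {δ : ℕ} (F : Fin δ → R⟦X⟧) (n : ℕ) :
    PowerSeries.coeff n (∏ i, F i) =
      ∑ f ∈ Finset.Nat.antidiagonalTuple δ n, ∏ i, PowerSeries.coeff (f i) (F i) := by
  rw [PowerSeries.coeff_prod]
  refine sum_equiv Finsupp.equivFunOnFinite (fun l => ?_) fun l _ => rfl
  simp [Finset.Nat.mem_antidiagonalTuple]

theorem polynomial_coeff_prod_eq_sum_antidiagonalTuple {R : Type*} [CommSemiring R]
    {δ : ℕ} (P : Fin δ → R[X]) (n : ℕ) :
    (∏ i, P i).coeff n = ∑ g ∈ Finset.Nat.antidiagonalTuple δ n, ∏ i, (P i).coeff (g i) := by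
  simpa only [← Polynomial.coeff_coe, ← Polynomial.coeToPowerSeries.ringHom_apply, map_prod]
    using powerSeries_coeff_prod_eq_sum_antidiagonalTuple (fun i => (P i : R⟦X⟧)) n

theorem prod_filter_le_eq_prod_natAdd {M : Type*} [CommMonoid M] {s t : ℕ} (F : Fin (s + t) → M) :
    ∏ j : Fin (s + t) with s ≤ j.1, F j = ∏ j, F (Fin.natAdd s j) := by
  rw [prod_filter, Fin.prod_univ_add, prod_eq_one fun i _ => if_neg (by simp), one_mul]
  simp

theorem coeff_one_add_pow_of_constantCoeff_eq_zero {R : Type*} [CommRing R] {W : R⟦X⟧}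
    (hW : PowerSeries.constantCoeff W = 0) (d n : ℕ) :
    PowerSeries.coeff n ((1 + W) ^ d) =
      ∑ δ ∈ range (n + 1), (d.choose δ : R) * PowerSeries.coeff n (W ^ δ) := by
  have h_order {δ : ℕ} (hδ : n < δ) : PowerSeries.coeff n (W ^ δ) = 0 :=
    PowerSeries.coeff_of_lt_order _ <| (Nat.cast_lt.2 hδ).trans_le <|
      PowerSeries.le_order_pow_of_constantCoeff_eq_zero _ hW
  have h_binomial : PowerSeries.coeff n ((1 + W) ^ d) =
      ∑ δ ∈ range (d + 1), (d.choose δ : R) * PowerSeries.coeff n (W ^ δ) := by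
    rw [add_comm, add_pow, map_sum]
    refine sum_congr rfl fun δ _ => ?_
    rw [one_pow, mul_one, mul_comm, ← map_natCast (PowerSeries.C (R := R)),
      PowerSeries.coeff_C_mul]
  rw [h_binomial]
  rcases le_total d n with hdn | hnd
  · refine sum_subset (range_subset_range.2 (by omega)) fun δ _ hδ => ?_
    rw [Nat.choose_eq_zero_of_lt (by simpa using hδ), Nat.cast_zero, zero_mul]
  · refine (sum_subset (range_subset_range.2 (by omega)) fun δ _ hδ => ?_).symm
    rw [h_order (by simpa using hδ), mul_zero]

/-- The exponential generating function `∑ aₙ zⁿ / n!`. -/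
noncomputable def egf {A : Type*} [CommRing A] [Algebra ℝ A] (a : ℕ → A) : A⟦X⟧ :=
  PowerSeries.mk fun n => (n.factorial : ℝ)⁻¹ • a n

variable {A : Type*} [CommRing A] [Algebra ℝ A]

theorem coeff_egf (a : ℕ → A) (n : ℕ) :
    PowerSeries.coeff n (egf a) = (n.factorial : ℝ)⁻¹ • a n :=
  PowerSeries.coeff_mk _ _

theorem coeff_succ_one_add_egf (a : ℕ → A) (n : ℕ) :
    PowerSeries.coeff (n + 1) (1 + egf a) = ((n + 1).factorial : ℝ)⁻¹ • a (n + 1) := by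
  rw [map_add, PowerSeries.coeff_one, if_neg n.succ_ne_zero, zero_add, coeff_egf]

theorem derivative_egf (a : ℕ → A) :
    PowerSeries.derivative A (egf a) = egf fun n => a (n + 1) := by
  ext n
  rw [PowerSeries.coeff_derivative, coeff_egf, coeff_egf, Nat.factorial_succ, smul_mul_assoc,
    mul_comm (a _), ← Nat.cast_succ, ← nsmul_eq_mul, ← Nat.cast_smul_eq_nsmul ℝ, smul_smul]
  congr 1
  push_cast
  field_simp

theorem coeff_prod_egf {δ : ℕ} (a : Fin δ → ℕ → A) (n : ℕ) :
    PowerSeries.coeff n (∏ i, egf (a i)) =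
      ∑ f ∈ Finset.Nat.antidiagonalTuple δ n,
        (∏ i, ((f i).factorial : ℝ))⁻¹ • ∏ i, a i (f i) := by
  simp only [powerSeries_coeff_prod_eq_sum_antidiagonalTuple, coeff_egf, Finset.prod_smul,
    prod_inv_distrib]

theorem coeff_egf_pow_mul_egf_pow {a c : ℕ → A}
    (ha : a 0 = 0) (hc : c 0 = 0) (s t n : ℕ) :
    PowerSeries.coeff n (egf a ^ s * egf c ^ t) =
      ∑ f ∈ Finset.Nat.antidiagonalTuple (s + t) n with ∀ i, 1 ≤ f i,
        (∏ i, ((f i).factorial : ℝ))⁻¹ •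
          ((∏ i, a (f (Fin.castAdd t i))) * ∏ j, c (f (Fin.natAdd s j))) := by
  have h_prod : egf a ^ s * egf c ^ t =
      ∏ i, egf (Fin.append (fun _ : Fin s => a) (fun _ : Fin t => c) i) := by
    rw [Fin.prod_univ_add]
    simp
  rw [h_prod, coeff_prod_egf, sum_filter]
  refine sum_congr rfl fun f _ => ?_
  rw [Fin.prod_univ_add fun i => Fin.append (fun _ : Fin s => a) (fun _ : Fin t => c) i (f i)]
  simp only [Fin.append_left, Fin.append_right]
  split_ifs with hf
  · rfl
  · push Not at hf
    obtain ⟨i, hi⟩ := hf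
    rw [Nat.lt_one_iff] at hi
    refine smul_eq_zero_of_right _ ?_
    induction i using Fin.addCases with
    | left i => exact mul_eq_zero_of_left (prod_eq_zero (mem_univ i) (by rw [hi, ha])) _
    | right j => exact mul_eq_zero_of_right _ (prod_eq_zero (mem_univ j) (by rw [hi, hc]))

end ExponentialGeneratingFunction

section ClusterRecursion

open scoped PowerSeries Polynomial

/-- The generating polynomial `∑ r_{n,k} u^k` of the cluster sizes `1 ≤ k ≤ n`. -/
noncomputable def clusterPolynomial (r : ℕ → ℕ → ℝ) (n : ℕ) : ℝ[X] :=
  ∑ k ∈ Icc 1 n, Polynomial.monomial k (r n k)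

theorem coeff_clusterPolynomial (r : ℕ → ℕ → ℝ) (n k : ℕ) :
    (clusterPolynomial r n).coeff k = if k ∈ Icc 1 n then r n k else 0 := by
  simp only [clusterPolynomial, Polynomial.finsetSum_coeff, Polynomial.coeff_monomial,
    sum_ite_eq']

theorem coeff_zero_clusterPolynomial (r : ℕ → ℕ → ℝ) (n : ℕ) :
    (clusterPolynomial r n).coeff 0 = 0 := by
  simp [coeff_clusterPolynomial]

theorem clusterPolynomial_zero (r : ℕ → ℕ → ℝ) : clusterPolynomial r 0 = 0 := by
  simp [clusterPolynomial]

theorem coeff_clusterPolynomial_of_pos {r : ℕ → ℕ → ℝ} (hr : ∀ n k, 1 ≤ n → n < k → r n k = 0)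
    {n k : ℕ} (hn : 1 ≤ n) (hk : 1 ≤ k) : (clusterPolynomial r n).coeff k = r n k := by
  rw [coeff_clusterPolynomial, ite_eq_left_iff, mem_Icc]
  exact fun h => (hr n k hn (by omega)).symm

theorem coeff_prod_clusterPolynomial {r : ℕ → ℕ → ℝ} (hr : ∀ n k, 1 ≤ n → n < k → r n k = 0)
    {s : ℕ} {f : Fin s → ℕ} (hf : ∀ i, 1 ≤ f i) (k : ℕ) :
    (∏ i, clusterPolynomial r (f i)).coeff k =
      ∑ g ∈ Finset.Nat.antidiagonalTuple s k with ∀ i, 1 ≤ g i, ∏ i, r (f i) (g i) := by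
  rw [polynomial_coeff_prod_eq_sum_antidiagonalTuple, sum_filter]
  refine sum_congr rfl fun g _ => ?_
  split_ifs with hg
  · exact prod_congr rfl fun i _ => coeff_clusterPolynomial_of_pos hr (hf i) (hg i)
  · push Not at hg
    obtain ⟨i, hi⟩ := hg
    rw [Nat.lt_one_iff] at hi
    exact prod_eq_zero (mem_univ i) (by rw [hi, coeff_zero_clusterPolynomial])

theorem sum_compositions_eq_coeff {r : ℕ → ℕ → ℝ} (hr : ∀ n k, 1 ≤ n → n < k → r n k = 0)
    {b : ℕ → ℝ} (hb : b 0 = 0) (w : ℝ) (s t n k : ℕ) :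
    ∑ f ∈ Finset.Nat.antidiagonalTuple (s + t) n with ∀ i, 1 ≤ f i,
        ((n.factorial : ℝ) / ∏ i, ((f i).factorial : ℝ)) *
          ∑ g ∈ Finset.Nat.antidiagonalTuple s k with ∀ i, 1 ≤ g i,
            w * (∏ i, r (f (Fin.castAdd t i)) (g i)) * ∏ j : Fin (s + t) with s ≤ j.1, b (f j) =
      n.factorial * (w * (PowerSeries.coeff n
        (egf (clusterPolynomial r) ^ s * egf (fun m => Polynomial.C (b m)) ^ t)).coeff k) := by
  rw [coeff_egf_pow_mul_egf_pow (clusterPolynomial_zero r) (by rw [hb, map_zero]),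
    Polynomial.finsetSum_coeff, mul_sum, mul_sum]
  refine sum_congr rfl fun f hf => ?_
  have hf_pos := (mem_filter.1 hf).2
  rw [← map_prod, Polynomial.coeff_smul, Polynomial.coeff_mul_C,
    coeff_prod_clusterPolynomial hr fun i => hf_pos _, prod_filter_le_eq_prod_natAdd, smul_eq_mul,
    ← sum_mul, ← mul_sum]
  ring

namespace clusterRec

variable {p : ℝ} {φ : ℕ → ℝ} {r : ℕ → ℕ → ℝ} {b : ℕ → ℝ}

theorem eq_zero_of_lt (h : clusterRec p φ r b) {n k : ℕ} (hn : 1 ≤ n) (hnk : n < k) :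
    r n k = 0 := by
  induction n using Nat.strong_induction_on generalizing k with
  | _ n ih =>
  rw [h.2 n k hn (by omega)]
  refine sum_eq_zero fun δ _ => sum_eq_zero fun ⟨s, hs⟩ _ => mul_eq_zero_of_right _ <|
    sum_eq_zero fun f hf => mul_eq_zero_of_right _ <| sum_eq_zero fun g hg => ?_
  have hsδ : s ≤ δ := Nat.lt_succ_iff.1 (mem_range.1 hs)
  rw [mem_filter, Finset.Nat.mem_antidiagonalTuple] at hf hg
  have h_sum_le : ∑ i : Fin s, f (Fin.castLE hsδ i) ≤ n - 1 := by
    rw [← hf.1]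
    exact (sum_map univ (Fin.castLEEmb hsδ) f).symm.trans_le (sum_le_sum_of_subset (subset_univ _))
  obtain ⟨i, hi⟩ : ∃ i : Fin s, f (Fin.castLE hsδ i) < g i := by
    by_contra! h_le
    have h_sum_g_le := (sum_le_sum fun i _ => h_le i).trans h_sum_le
    rw [hg.1] at h_sum_g_le
    omega
  have hfi : f (Fin.castLE hsδ i) ≤ n - 1 :=
    (single_le_sum_of_canonicallyOrdered (f := fun i => f (Fin.castLE hsδ i)) (mem_univ i)).trans
      h_sum_le
  exact mul_eq_zero_of_left (mul_eq_zero_of_right _ <|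
    prod_eq_zero (mem_univ i) (ih _ (by omega) (hf.2 _) hi)) _

theorem apply_zero (h : clusterRec p φ r b) : b 0 = 0 := by
  rw [h.1, Icc_eq_empty (by omega), sum_empty]

theorem eval_one_clusterPolynomial (h : clusterRec p φ r b) (n : ℕ) :
    (clusterPolynomial r n).eval 1 = b n := by
  rw [clusterPolynomial, Polynomial.eval_finsetSum, h.1]
  simp

end clusterRec

/-- The generating polynomial of a branch hanging off the root: with probability `p` its root
keeps the colour, so that its root cluster is counted by `u`, and otherwise it contributes `u^0`. -/
noncomputable def branchPolynomial (p : ℝ) (r : ℕ → ℕ → ℝ) (b : ℕ → ℝ) (n : ℕ) : ℝ[X] :=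
  Polynomial.C p * clusterPolynomial r n + Polynomial.C (1 - p) * Polynomial.C (b n)

theorem coeff_zero_branchPolynomial (p : ℝ) (r : ℕ → ℕ → ℝ) (b : ℕ → ℝ) (n : ℕ) :
    (branchPolynomial p r b n).coeff 0 = (1 - p) * b n := by
  rw [branchPolynomial, Polynomial.coeff_add, Polynomial.coeff_C_mul, Polynomial.coeff_C_mul,
    coeff_zero_clusterPolynomial, Polynomial.coeff_C_zero, mul_zero, zero_add]

theorem coeff_succ_branchPolynomial {r : ℕ → ℕ → ℝ} (hr : ∀ n k, 1 ≤ n → n < k → r n k = 0)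
    {n : ℕ} (hn : 1 ≤ n) (p : ℝ) (b : ℕ → ℝ) (k : ℕ) :
    (branchPolynomial p r b n).coeff (k + 1) = p * r n (k + 1) := by
  rw [branchPolynomial, Polynomial.coeff_add, Polynomial.coeff_C_mul, Polynomial.coeff_C_mul,
    coeff_clusterPolynomial_of_pos hr hn k.succ_pos, Polynomial.coeff_C_succ, mul_zero, add_zero]

theorem egf_branchPolynomial (p : ℝ) (r : ℕ → ℕ → ℝ) (b : ℕ → ℝ) :
    egf (branchPolynomial p r b) =
      PowerSeries.C (Polynomial.C p) * egf (clusterPolynomial r) +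
        PowerSeries.C (Polynomial.C (1 - p)) * egf fun n => Polynomial.C (b n) := by
  ext1 n
  simp only [map_add, PowerSeries.coeff_C_mul, coeff_egf, branchPolynomial, smul_add,
    mul_smul_comm]

theorem clusterRec.succ_succ_eq {p : ℝ} {φ : ℕ → ℝ} {r : ℕ → ℕ → ℝ} {b : ℕ → ℝ}
    (h : clusterRec p φ r b) (n k : ℕ) :
    r (n + 1) (k + 1) = ∑ δ ∈ range (n + 1), φ δ / δ.factorial *
      (n.factorial * (PowerSeries.coeff n (egf (branchPolynomial p r b) ^ δ)).coeff k) := by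
  rw [h.2 (n + 1) (k + 1) (by omega) (by omega)]
  refine sum_congr rfl fun δ _ => ?_
  rw [egf_branchPolynomial, add_pow, map_sum, Polynomial.finsetSum_coeff, mul_sum, mul_sum,
    ← sum_attach (range (δ + 1))]
  refine sum_congr rfl fun ⟨s, hs⟩ _ => ?_
  obtain ⟨t, rfl⟩ := Nat.exists_eq_add_of_le (Nat.lt_succ_iff.1 (mem_range.1 hs))
  simp only [Nat.add_sub_cancel, Nat.add_sub_cancel_left]
  have h_factor (F G : ℝ[X]⟦X⟧) :
      (PowerSeries.C (Polynomial.C p) * F) ^ s * (PowerSeries.C (Polynomial.C (1 - p)) * G) ^ t *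
          ((s + t).choose s : ℝ[X]⟦X⟧) =
        PowerSeries.C (Polynomial.C ((s + t).choose s * (p ^ s * (1 - p) ^ t))) *
          (F ^ s * G ^ t) := by
    simp only [map_mul, map_pow, map_natCast]
    ring
  rw [h_factor, PowerSeries.coeff_C_mul, Polynomial.coeff_C_mul]
  -- `Fin.castLE` in `clusterRec` is only definitionally `Fin.castAdd`, so `rw` would not match.
  refine (congrArg _ (sum_compositions_eq_coeff (fun _ _ => h.eq_zero_of_lt) h.apply_zero
    (p ^ s * (1 - p) ^ t) s t n k)).trans ?_
  ring

end ClusterRecursion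

section CoeffRatio

open scoped Topology PowerSeries Polynomial

/-- The coefficients of `z ^ n` in `F(z, u)` and in `G(z)` have, as `n → ∞`, a ratio tending to
`q(u)` modulo `u ^ K`, coefficientwise in `u`. -/
def CoeffRatioTendsto (F : ℝ[X]⟦X⟧) (G q : ℝ⟦X⟧) (K : ℕ) : Prop :=
  ∀ k < K, Tendsto (fun n => (PowerSeries.coeff n F).coeff k / PowerSeries.coeff n G) atTop
    (𝓝 (PowerSeries.coeff k q))

namespace CoeffRatioTendsto

variable {F G : ℝ[X]⟦X⟧} {H q q' : ℝ⟦X⟧} {e K : ℕ}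

theorem mul (h : IsIncreasingTreeSeries e H) (he : 0 < e) {l m : ℕ} (hl : 0 < l) (hm : 0 < m)
    (hF : CoeffRatioTendsto F (H ^ l) q K) (hG : CoeffRatioTendsto G (H ^ m) q' K) :
    CoeffRatioTendsto (F * G) (H ^ (l + m)) (q * q') K := by
  intro k hk
  have h_split (n : ℕ) :
      (PowerSeries.coeff n (F * G)).coeff k / PowerSeries.coeff n (H ^ (l + m)) =
        ∑ st ∈ antidiagonal k, (∑ ij ∈ antidiagonal n,
          (PowerSeries.coeff ij.1 F).coeff st.1 * (PowerSeries.coeff ij.2 G).coeff st.2) /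
            PowerSeries.coeff n (H ^ (l + m)) := by
    rw [PowerSeries.coeff_mul, Polynomial.finsetSum_coeff, ← sum_div, sum_comm]
    simp only [Polynomial.coeff_mul]
  rw [PowerSeries.coeff_mul k q]
  refine (tendsto_finsetSum _ fun st hst => ?_).congr fun n => (h_split n).symm
  have h_add : st.1 + st.2 = k := Finset.HasAntidiagonal.mem_antidiagonal.1 hst
  have h_pow_add (n : ℕ) : PowerSeries.coeff n (H ^ (l + m)) =
      ∑ ij ∈ antidiagonal n, PowerSeries.coeff ij.1 (H ^ l) * PowerSeries.coeff ij.2 (H ^ m) := by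
    rw [pow_add, PowerSeries.coeff_mul]
  exact tendsto_sum_antidiagonal_mul_div
    (u := fun n => (PowerSeries.coeff n F).coeff st.1)
    (v := fun n => (PowerSeries.coeff n G).coeff st.2)
    (h.coeff_pow_pos hl) (h.coeff_pow_pos hm) h_pow_add
    (h.monotone_coeff_pow he hl) (h.monotone_coeff_pow he hm)
    (h.tendsto_coeff_pow_div_coeff_pow hl (by omega))
    (h.tendsto_coeff_pow_div_coeff_pow hm (by omega))
    (hF st.1 (by omega)) (hG st.2 (by omega))

theorem pow (h : IsIncreasingTreeSeries e H) (he : 0 < e) (hF : CoeffRatioTendsto F H q K)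
    {m : ℕ} (hm : 0 < m) : CoeffRatioTendsto (F ^ m) (H ^ m) (q ^ m) K := by
  induction m, hm using Nat.le_induction with
  | base => simpa only [zero_add, pow_one] using hF
  | succ m hm ih =>
    have hF_one : CoeffRatioTendsto F (H ^ 1) q K := by rwa [pow_one]
    rw [pow_succ F, pow_succ q]
    exact mul h he hm one_pos ih hF_one

/-- The hypothesis expresses the `k`-th limit through the earlier ones, so all of them exist by
strong induction. -/
theorem exists_isFixedPt {Φ : ℝ⟦X⟧ → ℝ⟦X⟧} (hΦ : ∀ q k, CoeffRatioTendsto F H q k →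
      Tendsto (fun n => (PowerSeries.coeff n F).coeff k / PowerSeries.coeff n H) atTop
        (𝓝 (PowerSeries.coeff k (Φ q)))) :
    ∃ q, Function.IsFixedPt Φ q ∧ ∀ K, CoeffRatioTendsto F H q K := by
  have h_exists (k : ℕ) : ∃ l, Tendsto
      (fun n => (PowerSeries.coeff n F).coeff k / PowerSeries.coeff n H) atTop (𝓝 l) := by
    induction k using Nat.strong_induction_on with
    | _ k ih =>
      choose! l hl using ih
      refine ⟨_, hΦ (PowerSeries.mk l) k fun j hj => ?_⟩
      rw [PowerSeries.coeff_mk]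
      exact hl j hj
  choose l hl using h_exists
  have h_mk (K : ℕ) : CoeffRatioTendsto F H (PowerSeries.mk l) K := fun k _ => by
    rw [PowerSeries.coeff_mk]
    exact hl k
  refine ⟨PowerSeries.mk l, PowerSeries.ext fun k => ?_, h_mk⟩
  exact tendsto_nhds_unique (hΦ _ k (h_mk k)) (h_mk (k + 1) k k.lt_succ_self)

end CoeffRatioTendsto

end CoeffRatio

section DaryTrees

open scoped Topology PowerSeries Polynomial

/-- The out-degree weights of increasing `d`-ary trees. -/
noncomputable def daryWeight (d δ : ℕ) : ℝ :=
  if δ ≤ d then (d.factorial : ℝ) / (d - δ).factorial else 0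

theorem daryWeight_div_factorial (d δ : ℕ) : daryWeight d δ / δ.factorial = d.choose δ := by
  unfold daryWeight
  split_ifs with h
  · rw [Nat.cast_choose ℝ h]
    field_simp
  · rw [Nat.choose_eq_zero_of_lt (not_le.1 h), Nat.cast_zero, zero_div]

/-- The bivariate generating function of a possibly empty branch: exponential in the number of
vertices, ordinary in the size of the root cluster. -/
noncomputable def branchSeries (p : ℝ) (r : ℕ → ℕ → ℝ) (b : ℕ → ℝ) : ℝ[X]⟦X⟧ :=
  1 + egf (branchPolynomial p r b)

theorem coeff_succ_branchSeries_div (p : ℝ) (r : ℕ → ℕ → ℝ) (b : ℕ → ℝ) (n k : ℕ) :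
    (PowerSeries.coeff (n + 1) (branchSeries p r b)).coeff k /
        PowerSeries.coeff (n + 1) (1 + egf b) =
      (branchPolynomial p r b (n + 1)).coeff k / b (n + 1) := by
  rw [branchSeries, coeff_succ_one_add_egf, coeff_succ_one_add_egf, Polynomial.coeff_smul,
    smul_eq_mul, smul_eq_mul, mul_div_mul_left]
  positivity

namespace clusterRec

section Weights

variable {p : ℝ} {d : ℕ} {r : ℕ → ℕ → ℝ} {b : ℕ → ℝ}

theorem succ_succ_eq_coeff_branchSeries_pow (h : clusterRec p (daryWeight d) r b) (n k : ℕ) :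
    r (n + 1) (k + 1) =
      n.factorial * (PowerSeries.coeff n (branchSeries p r b ^ d)).coeff k := by
  have h_const : PowerSeries.constantCoeff (egf (branchPolynomial p r b)) = 0 := by
    rw [← PowerSeries.coeff_zero_eq_constantCoeff_apply, coeff_egf, branchPolynomial,
      clusterPolynomial_zero, h.apply_zero]
    simp
  rw [branchSeries, coeff_one_add_pow_of_constantCoeff_eq_zero h_const, h.succ_succ_eq,
    Polynomial.finsetSum_coeff, mul_sum]
  refine sum_congr rfl fun δ _ => ?_
  rw [daryWeight_div_factorial, ← map_natCast (Polynomial.C (R := ℝ)), Polynomial.coeff_C_mul]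
  ring

theorem clusterPolynomial_succ (h : clusterRec p (daryWeight d) r b) (n : ℕ) :
    clusterPolynomial r (n + 1) =
      (n.factorial : ℝ) • (Polynomial.X * PowerSeries.coeff n (branchSeries p r b ^ d)) := by
  ext k
  rw [Polynomial.coeff_smul, smul_eq_mul]
  rcases k with _ | k
  · rw [coeff_zero_clusterPolynomial, Polynomial.coeff_X_mul_zero, mul_zero]
  · rw [Polynomial.coeff_X_mul, ← h.succ_succ_eq_coeff_branchSeries_pow,
      coeff_clusterPolynomial_of_pos (fun _ _ => h.eq_zero_of_lt) (by omega) (by omega)]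

theorem map_eval_one_branchSeries {φ : ℕ → ℝ} (h : clusterRec p φ r b) :
    PowerSeries.map (Polynomial.evalRingHom 1) (branchSeries p r b) = 1 + egf b := by
  rw [branchSeries, map_add, map_one]
  congr 1
  ext n
  rw [PowerSeries.coeff_map, coeff_egf, coeff_egf, Polynomial.coe_evalRingHom,
    Polynomial.eval_smul, branchPolynomial, Polynomial.eval_add, Polynomial.eval_mul,
    h.eval_one_clusterPolynomial]
  simp only [Polynomial.eval_C, Polynomial.eval_mul]
  ring_nf

theorem coeff_one_add_egf_pow (h : clusterRec p (daryWeight d) r b) (n : ℕ) :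
    PowerSeries.coeff n ((1 + egf b) ^ d) = b (n + 1) / n.factorial := by
  rw [← h.map_eval_one_branchSeries, ← map_pow, PowerSeries.coeff_map, Polynomial.coe_evalRingHom,
    ← h.eval_one_clusterPolynomial, h.clusterPolynomial_succ, Polynomial.eval_smul,
    Polynomial.eval_mul, Polynomial.eval_X, one_mul, smul_eq_mul, mul_div_cancel_left₀]
  positivity

end Weights

variable {p : ℝ} {e : ℕ} {r : ℕ → ℕ → ℝ} {b : ℕ → ℝ}

theorem isIncreasingTreeSeries (h : clusterRec p (daryWeight (e + 1)) r b) :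
    IsIncreasingTreeSeries e (1 + egf b) where
  constantCoeff_eq_one := by
    rw [map_add, map_one, ← PowerSeries.coeff_zero_eq_constantCoeff_apply, coeff_egf, h.apply_zero,
      smul_zero, add_zero]
  derivative_eq_pow := by
    ext n
    rw [h.coeff_one_add_egf_pow, map_add, PowerSeries.derivative_one, zero_add, derivative_egf,
      coeff_egf, smul_eq_mul, inv_mul_eq_div]

theorem apply_succ_pos (h : clusterRec p (daryWeight (e + 1)) r b) (n : ℕ) : 0 < b (n + 1) := by
  have h_pos := h.isIncreasingTreeSeries.coeff_pow_pos e.succ_pos n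
  rw [h.coeff_one_add_egf_pow] at h_pos
  exact (div_pos_iff_of_pos_right (by positivity)).1 h_pos

theorem coeffRatioTendsto_branchSeries_pow (h : clusterRec p (daryWeight (e + 1)) r b) {q : ℝ⟦X⟧}
    {K : ℕ} (hq : CoeffRatioTendsto (branchSeries p r b) (1 + egf b) q K) :
    CoeffRatioTendsto (branchSeries p r b ^ (e + 1)) ((1 + egf b) ^ (e + 1)) (q ^ (e + 1)) K := by
  rcases e.eq_zero_or_pos with rfl | he
  · simpa only [zero_add, pow_one] using hq
  · exact hq.pow h.isIncreasingTreeSeries he e.succ_pos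

theorem tendsto_div_of_coeffRatioTendsto (h : clusterRec p (daryWeight (e + 1)) r b) {q : ℝ⟦X⟧}
    {k : ℕ} (hq : CoeffRatioTendsto (branchSeries p r b) (1 + egf b) q (k + 1)) :
    Tendsto (fun n => r n (k + 1) / b n) atTop (𝓝 (PowerSeries.coeff k (q ^ (e + 1)))) := by
  rw [← tendsto_add_atTop_iff_nat 1]
  refine (h.coeffRatioTendsto_branchSeries_pow hq k k.lt_succ_self).congr fun n => ?_
  rw [h.succ_succ_eq_coeff_branchSeries_pow, h.coeff_one_add_egf_pow, div_div_eq_mul_div, mul_comm]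

theorem tendsto_coeff_branchSeries_div (h : clusterRec p (daryWeight (e + 1)) r b) {q : ℝ⟦X⟧}
    {k : ℕ} (hq : CoeffRatioTendsto (branchSeries p r b) (1 + egf b) q k) :
    Tendsto (fun n => (PowerSeries.coeff n (branchSeries p r b)).coeff k /
        PowerSeries.coeff n (1 + egf b)) atTop
      (𝓝 (PowerSeries.coeff k (PowerSeries.C (1 - p) +
        PowerSeries.C p * PowerSeries.X * q ^ (e + 1)))) := by
  rw [← tendsto_add_atTop_iff_nat 1]
  rcases k with _ | k
  · simp only [coeff_succ_branchSeries_div, coeff_zero_branchPolynomial,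
      mul_div_cancel_right₀ _ (h.apply_succ_pos _).ne']
    simp
  · simp only [coeff_succ_branchSeries_div, mul_div_assoc,
      coeff_succ_branchPolynomial (fun _ _ => h.eq_zero_of_lt) (Nat.succ_pos _)]
    rw [map_add, mul_assoc, PowerSeries.coeff_C_mul, PowerSeries.coeff_succ_X_mul,
      PowerSeries.coeff_C, if_neg k.succ_ne_zero, zero_add]
    exact ((tendsto_add_atTop_iff_nat 1).2 (h.tendsto_div_of_coeffRatioTendsto hq)).const_mul p

theorem tendsto_div (h : clusterRec p (daryWeight (e + 1)) r b) (k : ℕ) :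
    Tendsto (fun n => r n (k + 1) / b n) atTop
      (𝓝 (raneyNumber ℝ (e + 1) (e + 1) k * p ^ k * (1 - p) ^ (e + 1 + e * k))) := by
  obtain ⟨q, hq_fixed, hq_lim⟩ :=
    CoeffRatioTendsto.exists_isFixedPt fun _ _ => h.tendsto_coeff_branchSeries_div
  have h_lim := h.tendsto_div_of_coeffRatioTendsto (hq_lim (k + 1))
  rwa [coeff_pow_eq_raneyNumber e.succ_pos hq_fixed.eq.symm k e.succ_pos] at h_lim

end clusterRec

end DaryTrees

theorem stmt18_general (d : ℕ) (hd : 1 ≤ d) (p : ℝ) (r : ℕ → ℕ → ℝ) (b : ℕ → ℝ)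
    (hrec : clusterRec p
      (fun δ => if δ ≤ d then ((d.factorial : ℝ) / ((d - δ).factorial : ℝ)) else 0) r b)
    (k : ℕ) (hk : 1 ≤ k) :
    Tendsto (fun n : ℕ => r n k / b n) atTop
      (nhds ((1 / (k : ℝ)) * ((k * d).choose (k - 1) : ℝ)
        * p ^ (k - 1) * (1 - p) ^ (k * d - k + 1))) := by
  obtain ⟨e, rfl⟩ := Nat.exists_eq_add_of_le' hd
  obtain ⟨j, rfl⟩ := Nat.exists_eq_add_of_le' hk
  have h_raney : raneyNumber ℝ (e + 1) (e + 1) j =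
      1 / ((j + 1 : ℕ) : ℝ) * ((j + 1) * (e + 1)).choose j := by
    rw [raneyNumber, show e + 1 + (e + 1) * j = (j + 1) * (e + 1) by ring]
    push_cast
    field_simp
  have h_exp : (j + 1) * (e + 1) - (j + 1) + 1 = e + 1 + e * j := by
    rw [← Nat.mul_sub_one, Nat.add_sub_cancel]
    ring
  rw [h_exp, Nat.add_sub_cancel, ← h_raney]
  exact clusterRec.tendsto_div hrec j

/-- for random increasing `d`-ary trees, the probability that the root
cluster has exactly `k` vertices converges to the probability that a Galton–Watson tree
with `Bin(d,p)` offspring distribution has total progeny `k`. -/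
theorem stmt18 (d : ℕ) (hd : 2 ≤ d) (p : ℝ) (hp0 : 0 < p) (hp1 : p < 1)
    (r : ℕ → ℕ → ℝ) (b : ℕ → ℝ)
    (hrec : clusterRec p
      (fun δ => if δ ≤ d then ((d.factorial : ℝ) / ((d - δ).factorial : ℝ)) else 0) r b)
    (k : ℕ) (hk : 1 ≤ k) :
    Tendsto (fun n : ℕ => r n k / b n) atTop
      (nhds ((1 / (k : ℝ)) * ((k * d).choose (k - 1) : ℝ)
        * p ^ (k - 1) * (1 - p) ^ (k * d - k + 1))) :=
  stmt18_general d (by omega) p r b hrec k hk
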